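/- Let d > k ≥ 0 be integers, let X be a d-dimensional simplicial complex with n ≥ 1 simplices, and let X' be the complex obtained from X by attaching n+1 cones. Then X admits an acyclic matching all of whose critical simplices have dimension ≤ k if and only if X' admits an acyclic matching all of whose critical simplices have dimension ≤ k+1. -/

import Mathlib

open Finset

/-- A (finite) simplicial complex: a finite collection of nonempty finite sets
    of vertices, closed under taking nonempty subsets. -/
def IsComplex {U : Type*} [DecidableEq U] (X : Finset (Finset U)) : Prop :=
  (∀ σ ∈ X, σ ≠ ∅) ∧ ∀ σ ∈ X, ∀ τ : Finset U, τ ⊆ σ → τ ≠ ∅ → τ ∈ X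

/-- Arc of the Hasse diagram `H(X)`: from `σ` to `τ` iff `τ ⊂ σ` and
    `dim σ = dim τ + 1` (i.e. `|σ| = |τ| + 1`). -/
def HasseArc {U : Type*} [DecidableEq U] (X : Finset (Finset U)) (σ τ : Finset U) : Prop :=
  σ ∈ X ∧ τ ∈ X ∧ τ ⊂ σ ∧ σ.card = τ.card + 1

/-- A matching on `X`: a set of arcs of `H(X)` such that every simplex of `X`
    belongs to at most one arc. -/
def IsMatching {U : Type*} [DecidableEq U] (X : Finset (Finset U))
    (M : Set (Finset U × Finset U)) : Prop :=
  (∀ p ∈ M, HasseArc X p.1 p.2) ∧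
  ∀ p ∈ M, ∀ q ∈ M, p ≠ q → p.1 ≠ q.1 ∧ p.1 ≠ q.2 ∧ p.2 ≠ q.1 ∧ p.2 ≠ q.2

/-- Arc of the modified Hasse diagram `H(X)^M`, obtained from `H(X)` by
    reversing the direction of each arc in `M`. -/
def ModArc {U : Type*} [DecidableEq U] (X : Finset (Finset U))
    (M : Set (Finset U × Finset U)) (a b : Finset U) : Prop :=
  (HasseArc X a b ∧ (a, b) ∉ M) ∨ (b, a) ∈ M

/-- An acyclic matching: a matching such that `H(X)^M` has no directed cycle. -/
def IsAcyclicMatching {U : Type*} [DecidableEq U] (X : Finset (Finset U))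
    (M : Set (Finset U × Finset U)) : Prop :=
  IsMatching X M ∧ ∀ a : Finset U, ¬ Relation.TransGen (ModArc X M) a a

/-- `σ` is a critical simplex of the matching `M` on `X`: it belongs to no arc of `M`. -/
def IsCritical {U : Type*} [DecidableEq U] (X : Finset (Finset U))
    (M : Set (Finset U × Finset U)) (σ : Finset U) : Prop :=
  σ ∈ X ∧ ∀ p ∈ M, p.1 ≠ σ ∧ p.2 ≠ σ

/-- `X` has dimension exactly `d` (the dimension of a simplex `σ` is `|σ| - 1`). -/
def HasDim {U : Type*} [DecidableEq U] (X : Finset (Finset U)) (d : ℕ) : Prop :=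
  (∀ σ ∈ X, σ.card ≤ d + 1) ∧ ∃ σ ∈ X, σ.card = d + 1

/-- The complex `X' = X ∪ { σ ∪ {wᵢ} : σ ∈ X ∪ {∅}, i = 1, …, n+1 }`, obtained
    from `X` by attaching `n+1` cones with apexes `w 0, …, w n`. -/
def coneCx {U : Type*} [DecidableEq U] (X : Finset (Finset U)) (n : ℕ)
    (w : Fin (n + 1) → U) : Finset (Finset U) :=
  X ∪ Finset.univ.biUnion (fun i : Fin (n + 1) =>
    (insert (∅ : Finset U) X).image (fun σ => insert (w i) σ))

/-!
From `X` to `X'`: match `σ` with `σ ∪ {w₀}` for every `σ` in `X`, and copy the matching of `X` to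
`{σ ∪ {wᵢ}}` for every other `i`. The number of apices `wᵢ`, `i ≠ 0`, of a simplex never increases
along an arc and is kept by reversed ones, so a directed cycle stays either in the closed cone over
`w₀` or among the simplices containing one fixed `wᵢ`. Coning raises dimensions by one, whence
`k + 1`.

From `X'` to `X`: a simplex `σ` of `X` is matched with `σ ∪ {wᵢ}` for at most one `i`. As there are
more apices than simplices, some `wᵢ` is never used this way, and the arcs of the matching of `X'`
between simplices `σ ∪ {wᵢ}` with `σ ∈ X` induce a matching of `X`. The only arc at `wᵢ` that is
lost is the one containing the vertex `wᵢ` itself; its other end is an edge `v wᵢ`, so the only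
additional critical simplex is the vertex `v`.
-/

theorem not_transGen_self_of_lt {α β : Type*} [Preorder β] {r : α → α → Prop} (f : α → β)
    (hf : ∀ a b, r a b → f b < f a) (a : α) : ¬ Relation.TransGen r a a := by
  intro hcycle
  have hlt := hcycle.lift (p := (· > ·)) f hf
  rw [Relation.transGen_eq_self] at hlt
  exact lt_irrefl (f a) hlt

/-- The family `Y` is the family of fibres of a monotone map to `ι` from the union of the `Y i`,
ordered by inclusion. -/
def IsMonotonePartition {ι U : Type*} [PartialOrder ι] (Y : ι → Finset (Finset U)) : Prop :=
  ∀ i j, ∀ σ ∈ Y i, ∀ τ ∈ Y j, τ ⊆ σ → j ≤ i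

theorem IsMonotonePartition.eq_of_mem {ι U : Type*} [PartialOrder ι] {Y : ι → Finset (Finset U)}
    (hY : IsMonotonePartition Y) {i j : ι} {σ : Finset U} (hi : σ ∈ Y i) (hj : σ ∈ Y j) : i = j :=
  le_antisymm (hY j i σ hj σ hi Subset.rfl) (hY i j σ hi σ hj Subset.rfl)

section

variable {U : Type*} [DecidableEq U] {X Y : Finset (Finset U)} {M : Set (Finset U × Finset U)}
  {σ τ : Finset U} {v : U} {m : ℕ}

theorem HasseArc.mono (h : HasseArc X σ τ) (hXY : X ⊆ Y) : HasseArc Y σ τ :=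
  ⟨hXY h.1, hXY h.2.1, h.2.2⟩

theorem hasseArc_insert_iff (hσX : σ ∈ X) (hτX : τ ∈ X) (hσY : insert v σ ∈ Y)
    (hτY : insert v τ ∈ Y) (hσ : v ∉ σ) (hτ : v ∉ τ) :
    HasseArc Y (insert v σ) (insert v τ) ↔ HasseArc X σ τ := by
  simp only [HasseArc, hσX, hτX, hσY, hτY, true_and, ssubset_iff_subset_not_subset,
    insert_subset_insert_iff hσ, insert_subset_insert_iff hτ, card_insert_of_notMem hσ,
    card_insert_of_notMem hτ, Nat.add_right_cancel_iff]

theorem HasseArc.eq_erase (h : HasseArc X σ τ) (hσ : v ∈ σ) (hτ : v ∉ τ) : τ = σ.erase v := by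
  obtain ⟨-, -, hsub, hcard⟩ := h
  refine eq_of_subset_of_card_le (subset_erase.2 ⟨hsub.1, hτ⟩) ?_
  rw [card_erase_of_mem hσ, hcard, Nat.add_sub_cancel]

theorem ModArc.mem (hM : IsMatching X M) (h : ModArc X M σ τ) : σ ∈ X ∧ τ ∈ X :=
  h.elim (fun h => ⟨h.1.1, h.1.2.1⟩) fun h => ⟨(hM.1 _ h).2.1, (hM.1 _ h).1⟩

/-- The matching on `X` induced, along a map `φ` of simplices, by a matching of another family:
`σ` is matched with `τ` when `φ σ` is matched with `φ τ`. -/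
def comapMatching {V : Type*} (φ : Finset U → Finset V) (X : Finset (Finset U))
    (M : Set (Finset V × Finset V)) : Set (Finset U × Finset U) :=
  {p | p.1 ∈ X ∧ p.2 ∈ X ∧ (φ p.1, φ p.2) ∈ M}

theorem IsAcyclicMatching.comap {V : Type*} [DecidableEq V] {Y : Finset (Finset V)}
    {M : Set (Finset V × Finset V)} {φ : Finset U → Finset V} (hM : IsAcyclicMatching Y M)
    (hφ : Set.InjOn φ X)
    (harc : ∀ σ ∈ X, ∀ τ ∈ X, HasseArc Y (φ σ) (φ τ) ↔ HasseArc X σ τ) :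
    IsAcyclicMatching X (comapMatching φ X M) := by
  refine ⟨⟨?_, ?_⟩, ?_⟩
  · rintro ⟨σ, τ⟩ ⟨hσ, hτ, hστ⟩
    exact (harc σ hσ τ hτ).1 (hM.1.1 _ hστ)
  · rintro ⟨σ, τ⟩ ⟨hσ, hτ, hστ⟩ ⟨σ', τ'⟩ ⟨hσ', hτ', hστ'⟩ hne
    have himage : (φ σ, φ τ) ≠ (φ σ', φ τ') := fun h => hne <|
      Prod.ext (hφ hσ hσ' (congrArg Prod.fst h)) (hφ hτ hτ' (congrArg Prod.snd h))
    obtain ⟨h₁₁, h₁₂, h₂₁, h₂₂⟩ := hM.1.2 _ hστ _ hστ' himage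
    exact ⟨ne_of_apply_ne φ h₁₁, ne_of_apply_ne φ h₁₂, ne_of_apply_ne φ h₂₁, ne_of_apply_ne φ h₂₂⟩
  · refine fun σ hcycle => hM.2 (φ σ) (hcycle.lift φ ?_)
    rintro σ τ (⟨hστ, hnot⟩ | hτσ)
    · exact Or.inl ⟨(harc σ hστ.1 τ hστ.2.1).2 hστ, fun h => hnot ⟨hστ.1, hστ.2.1, h⟩⟩
    · exact Or.inr hτσ.2.2

theorem IsCritical.of_comap {V : Type*} [DecidableEq V] {Y : Finset (Finset V)}
    {M : Set (Finset V × Finset V)} {φ : Finset U → Finset V}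
    (hσ : IsCritical X (comapMatching φ X M) σ)
    (hφσ : φ σ ∈ Y) (hdown : ∀ τ, (φ σ, τ) ∈ M → ∃ ρ ∈ X, φ ρ = τ)
    (hup : ∀ τ, (τ, φ σ) ∈ M → ∃ ρ ∈ X, φ ρ = τ) : IsCritical Y M (φ σ) := by
  refine ⟨hφσ, ?_⟩
  rintro ⟨τ, τ'⟩ hM
  refine ⟨?_, ?_⟩
  · rintro rfl
    obtain ⟨ρ, hρ, rfl⟩ := hdown _ hM
    exact (hσ.2 (σ, ρ) ⟨hσ.1, hρ, hM⟩).1 rfl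
  · rintro rfl
    obtain ⟨ρ, hρ, rfl⟩ := hup _ hM
    exact (hσ.2 (ρ, σ) ⟨hρ, hσ.1, hM⟩).2 rfl

/-- The element matching of a family `X` at a vertex `v`: `σ` is matched with `σ ∪ {v}` whenever
both belong to `X`. -/
def elementMatching (X : Finset (Finset U)) (v : U) : Set (Finset U × Finset U) :=
  {p | p.1 ∈ X ∧ p.2 ∈ X ∧ v ∉ p.2 ∧ p.1 = insert v p.2}

theorem isMatching_elementMatching (X : Finset (Finset U)) (v : U) :
    IsMatching X (elementMatching X v) := by
  refine ⟨?_, ?_⟩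
  · rintro ⟨ρ, σ⟩ ⟨hσv, hσ, hv, (rfl : ρ = insert v σ)⟩
    exact ⟨hσv, hσ, ssubset_insert hv, card_insert_of_notMem hv⟩
  · rintro ⟨ρ, σ⟩ ⟨-, -, hσ, (rfl : ρ = insert v σ)⟩
      ⟨ρ', τ⟩ ⟨-, -, hτ, (rfl : ρ' = insert v τ)⟩ hne
    have hστ : σ ≠ τ := fun h => hne (h ▸ rfl)
    exact ⟨fun h => hστ (insert_erase_invOn.2.injOn hσ hτ h),
      fun h => hτ (h ▸ mem_insert_self v σ), fun h => hσ (h ▸ mem_insert_self v τ), hστ⟩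

theorem isAcyclicMatching_elementMatching (X : Finset (Finset U)) (v : U) :
    IsAcyclicMatching X (elementMatching X v) := by
  -- Arcs `σ → insert v σ` lower the indicator; all others delete a vertex different from `v`.
  refine ⟨isMatching_elementMatching X v, not_transGen_self_of_lt
    (fun s => 2 * (s.erase v).card + if v ∈ s then 0 else 1) ?_⟩
  rintro σ τ (⟨hστ, hnot⟩ | ⟨-, -, hv, (rfl : τ = insert v σ)⟩)
  · obtain ⟨hσX, hτX, hsub, hcard⟩ := id hστ
    by_cases hσ : v ∈ σ <;> by_cases hτ : v ∈ τ
    · have hσcard := card_erase_add_one hσ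
      have hτcard := card_erase_add_one hτ
      simp only [hσ, hτ, if_true]
      omega
    · have heq : σ = insert v τ := by rw [hστ.eq_erase hσ hτ, insert_erase hσ]
      exact absurd ⟨hσX, hτX, hτ, heq⟩ hnot
    · exact absurd (hsub.1 hτ) hσ
    · simp only [hσ, hτ, if_false, erase_eq_of_notMem, not_false_eq_true]
      omega
  · simp [hv]

/-- `X` admits an acyclic matching all of whose critical simplices have at most `m` vertices,
that is, dimension less than `m`. -/
def AdmitsAcyclicMatching (X : Finset (Finset U)) (m : ℕ) : Prop :=
  ∃ M : Set (Finset U × Finset U), IsAcyclicMatching X M ∧ ∀ σ, IsCritical X M σ → σ.card ≤ m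

theorem AdmitsAcyclicMatching.mono {m' : ℕ} (h : AdmitsAcyclicMatching X m) (hm : m ≤ m') :
    AdmitsAcyclicMatching X m' :=
  h.imp fun _ hM => ⟨hM.1, fun σ hσ => (hM.2 σ hσ).trans hm⟩

theorem admitsAcyclicMatching_of_card_le (h : ∀ σ ∈ X, σ.card ≤ m) :
    AdmitsAcyclicMatching X m := by
  refine ⟨∅, ⟨⟨by simp, by simp⟩, not_transGen_self_of_lt card ?_⟩, fun σ hσ => h σ hσ.1⟩
  rintro σ τ (⟨hστ, -⟩ | hτσ)
  · exact card_lt_card hστ.2.2.1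
  · exact absurd hτσ (Set.notMem_empty _)

section Patchwork

variable {ι : Type*} [Fintype ι] [PartialOrder ι] {Y : ι → Finset (Finset U)}
  {M : ι → Set (Finset U × Finset U)} {i j : ι}

theorem isMatching_biUnion (hY : IsMonotonePartition Y) (hM : ∀ i, IsMatching (Y i) (M i)) :
    IsMatching (univ.biUnion Y) (⋃ i, M i) := by
  refine ⟨fun p hp => ?_, fun p hp q hq hne => ?_⟩
  · obtain ⟨i, hi⟩ := Set.mem_iUnion.1 hp
    exact ((hM i).1 p hi).mono (subset_biUnion_of_mem Y (mem_univ i))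
  · obtain ⟨i, hi⟩ := Set.mem_iUnion.1 hp
    obtain ⟨j, hj⟩ := Set.mem_iUnion.1 hq
    obtain rfl | hij := eq_or_ne i j
    · exact (hM i).2 p hi q hj hne
    · have hdisj : ∀ σ ∈ Y i, ∀ τ ∈ Y j, σ ≠ τ := fun σ hσ τ hτ h =>
        hij (hY.eq_of_mem hσ (h ▸ hτ))
      obtain ⟨hp₁, hp₂, -⟩ := (hM i).1 p hi
      obtain ⟨hq₁, hq₂, -⟩ := (hM j).1 q hj
      exact ⟨hdisj _ hp₁ _ hq₁, hdisj _ hp₁ _ hq₂, hdisj _ hp₂ _ hq₁, hdisj _ hp₂ _ hq₂⟩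

theorem ModArc.of_biUnion (hY : IsMonotonePartition Y)
    (hM : ∀ i, IsMatching (Y i) (M i)) (h : ModArc (univ.biUnion Y) (⋃ i, M i) σ τ)
    (hσ : σ ∈ Y i) (hτ : τ ∈ Y j) : j ≤ i ∧ (j = i → ModArc (Y i) (M i) σ τ) := by
  rcases h with ⟨hστ, hnot⟩ | hτσ
  · refine ⟨hY i j σ hσ τ hτ hστ.2.2.1.1, ?_⟩
    rintro rfl
    exact Or.inl ⟨⟨hσ, hτ, hστ.2.2⟩, fun h => hnot (Set.mem_iUnion_of_mem _ h)⟩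
  · obtain ⟨l, hl⟩ := Set.mem_iUnion.1 hτσ
    obtain rfl : i = l := hY.eq_of_mem hσ ((hM l).1 _ hl).2.1
    obtain rfl : j = i := hY.eq_of_mem hτ ((hM i).1 _ hl).1
    exact ⟨le_rfl, fun _ => Or.inr hl⟩

theorem transGen_modArc_of_biUnion (hY : IsMonotonePartition Y)
    (hM : ∀ i, IsMatching (Y i) (M i))
    (h : Relation.TransGen (ModArc (univ.biUnion Y) (⋃ i, M i)) σ τ)
    (hσ : σ ∈ Y i) (hτ : τ ∈ Y j) :
    j ≤ i ∧ (j = i → Relation.TransGen (ModArc (Y i) (M i)) σ τ) := by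
  induction h generalizing j with
  | single h => exact (h.of_biUnion hY hM hσ hτ).imp_right fun h' hji => .single (h' hji)
  | tail _ hρτ ih =>
    obtain ⟨l, -, hρ⟩ := mem_biUnion.1 (hρτ.mem (isMatching_biUnion hY hM)).1
    obtain ⟨hli, hσρ⟩ := ih hρ
    obtain ⟨hjl, hρτ⟩ := hρτ.of_biUnion hY hM hρ hτ
    refine ⟨hjl.trans hli, ?_⟩
    rintro rfl
    obtain rfl := le_antisymm hjl hli
    exact (hσρ rfl).tail (hρτ rfl)

/-- The patchwork theorem of discrete Morse theory. -/
theorem AdmitsAcyclicMatching.biUnion (hY : IsMonotonePartition Y)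
    (h : ∀ i, AdmitsAcyclicMatching (Y i) m) : AdmitsAcyclicMatching (univ.biUnion Y) m := by
  choose M hM hcrit using h
  have hmatch : ∀ i, IsMatching (Y i) (M i) := fun i => (hM i).1
  refine ⟨⋃ i, M i, ⟨isMatching_biUnion hY hmatch, fun σ hcycle => ?_⟩, fun σ hσ => ?_⟩
  · obtain ⟨ρ, hσρ, -⟩ := Relation.TransGen.head'_iff.1 hcycle
    obtain ⟨i, -, hσ⟩ := mem_biUnion.1 (hσρ.mem (isMatching_biUnion hY hmatch)).1
    exact (hM i).2 σ ((transGen_modArc_of_biUnion hY hmatch hcycle hσ hσ).2 rfl)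
  · obtain ⟨i, -, hi⟩ := mem_biUnion.1 hσ.1
    exact hcrit i σ ⟨hi, fun p hp => hσ.2 p (Set.mem_iUnion_of_mem i hp)⟩

end Patchwork

theorem AdmitsAcyclicMatching.insert_empty (h : AdmitsAcyclicMatching X m) :
    AdmitsAcyclicMatching (insert ∅ X) m := by
  by_cases hX : ∅ ∈ X
  · rwa [insert_eq_of_mem hX]
  have hpieces : insert ∅ X = univ.biUnion fun b : Bool => if b then X else {∅} := by
    ext σ
    simp
  rw [hpieces]
  refine .biUnion ?_ ?_
  · rintro (_ | _) (_ | _) σ hσ τ hτ hτσ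
    · exact le_rfl
    · obtain rfl : σ = ∅ := by simpa using hσ
      exact absurd (subset_empty.1 hτσ ▸ hτ) hX
    · exact Bool.false_le _
    · exact le_rfl
  · rintro (_ | _)
    · exact admitsAcyclicMatching_of_card_le (by simp)
    · exact h

theorem AdmitsAcyclicMatching.image_insert (h : AdmitsAcyclicMatching X m)
    (hv : ∀ σ ∈ X, v ∉ σ) : AdmitsAcyclicMatching (X.image (insert v)) (m + 1) := by
  obtain ⟨M, hM, hcrit⟩ := h
  refine ⟨comapMatching (erase · v) (X.image (insert v)) M, hM.comap ?_ ?_, fun s hs => ?_⟩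
  · refine insert_erase_invOn.1.injOn.mono ?_
    simp only [coe_image]
    rintro _ ⟨σ, -, rfl⟩
    exact mem_insert_self v σ
  · simp only [forall_mem_image]
    intro σ hσ τ hτ
    rw [erase_insert (hv σ hσ), erase_insert (hv τ hτ)]
    exact (hasseArc_insert_iff hσ hτ (mem_image_of_mem _ hσ) (mem_image_of_mem _ hτ)
      (hv σ hσ) (hv τ hτ)).symm
  · obtain ⟨σ, hσ, rfl⟩ := mem_image.1 hs.1
    have hlift : ∀ τ ∈ X, ∃ ρ ∈ X.image (insert v), ρ.erase v = τ := fun τ hτ =>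
      ⟨insert v τ, mem_image_of_mem _ hτ, erase_insert (hv τ hτ)⟩
    have hσcrit : IsCritical X M ((insert v σ).erase v) := hs.of_comap
      (by rwa [erase_insert (hv σ hσ)]) (fun τ hτ => hlift τ (hM.1.1 _ hτ).2.1)
      fun τ hτ => hlift τ (hM.1.1 _ hτ).1
    rw [erase_insert (hv σ hσ)] at hσcrit
    rw [card_insert_of_notMem (hv σ hσ)]
    exact Nat.succ_le_succ (hcrit σ hσcrit)

/-- The simplices containing `v` of the cone over `X` with apex `v`, including the vertex `v`. -/
def openCone (X : Finset (Finset U)) (v : U) : Finset (Finset U) :=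
  (insert ∅ X).image (insert v)

theorem insert_mem_openCone (hσ : σ ∈ X) : insert v σ ∈ openCone X v :=
  mem_image_of_mem _ (mem_insert_of_mem hσ)

theorem apex_mem_of_mem_openCone (hσ : σ ∈ openCone X v) : v ∈ σ := by
  obtain ⟨τ, -, rfl⟩ := mem_image.1 hσ
  exact mem_insert_self v τ

theorem notMem_of_mem_insert_empty (hv : ∀ σ ∈ X, v ∉ σ) : ∀ σ ∈ insert ∅ X, v ∉ σ :=
  (forall_mem_insert _ _ _).2 ⟨notMem_empty v, hv⟩

theorem admitsAcyclicMatching_openCone (h : AdmitsAcyclicMatching X m) (hv : ∀ σ ∈ X, v ∉ σ) :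
    AdmitsAcyclicMatching (openCone X v) (m + 1) :=
  h.insert_empty.image_insert (notMem_of_mem_insert_empty hv)

theorem admitsAcyclicMatching_cone (hv : ∀ σ ∈ X, v ∉ σ) :
    AdmitsAcyclicMatching (X ∪ openCone X v) 1 := by
  have hmatched : ∀ σ ∈ X, (insert v σ, σ) ∈ elementMatching (X ∪ openCone X v) v := fun σ hσ =>
    ⟨mem_union_right _ (insert_mem_openCone hσ), mem_union_left _ hσ, hv σ hσ, rfl⟩
  refine ⟨_, isAcyclicMatching_elementMatching _ v, fun s hs => ?_⟩
  rcases mem_union.1 hs.1 with hsX | hsC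
  · exact absurd rfl (hs.2 _ (hmatched s hsX)).2
  · obtain ⟨σ, hσ, rfl⟩ := mem_image.1 hsC
    rcases mem_insert.1 hσ with rfl | hσ
    · simp
    · exact absurd rfl (hs.2 _ (hmatched σ hσ)).1

theorem eq_of_apex_mem_of_mem_openCone {ι : Type*} {w : ι → U} {i j : ι}
    (hw : Function.Injective w) (hwX : ∀ i, ∀ σ ∈ X, w i ∉ σ) (hσ : σ ∈ openCone X (w j))
    (hi : w i ∈ σ) : i = j := by
  obtain ⟨τ, hτ, rfl⟩ := mem_image.1 hσ
  exact hw ((mem_insert.1 hi).resolve_right (notMem_of_mem_insert_empty (hwX i) τ hτ))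

theorem IsMatching.exists_forall_insert_notMem {ι : Type*} [Fintype ι] {w : ι → U}
    (hM : IsMatching Y M) (hcard : X.card < Fintype.card ι) (hw : Function.Injective w)
    (hwX : ∀ i, ∀ σ ∈ X, w i ∉ σ) : ∃ i, ∀ σ ∈ X, (insert (w i) σ, σ) ∉ M := by
  by_contra! hall
  choose f hfX hfM using hall
  obtain ⟨i, -, j, -, hij, hf⟩ :=
    exists_ne_map_eq_of_card_lt_of_maps_to (s := univ) hcard fun i _ => hfX i
  have harcs : (insert (w i) (f i), f i) ≠ (insert (w j) (f j), f j) := by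
    intro h
    have hi : w i ∈ insert (w j) (f j) := (Prod.mk.inj h).1 ▸ mem_insert_self (w i) (f i)
    exact hij (eq_of_apex_mem_of_mem_openCone hw hwX (insert_mem_openCone (hfX j)) hi)
  exact (hM.2 _ (hfM i) _ (hfM j) harcs).2.2.2 hf

section Cones

variable {n : ℕ} {w : Fin (n + 1) → U} {i : Fin (n + 1)}

theorem mem_openCone_of_apex_mem (hw : Function.Injective w) (hwX : ∀ i, ∀ σ ∈ X, w i ∉ σ)
    (hσ : σ ∈ coneCx X n w) (hi : w i ∈ σ) : σ ∈ openCone X (w i) := by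
  rcases mem_union.1 hσ with hσX | hσC
  · exact absurd hi (hwX i σ hσX)
  · obtain ⟨j, -, hj⟩ := mem_biUnion.1 hσC
    exact eq_of_apex_mem_of_mem_openCone hw hwX hj hi ▸ hj

theorem insert_apex_mem_coneCx (hσ : σ ∈ X) (i : Fin (n + 1)) : insert (w i) σ ∈ coneCx X n w :=
  mem_union_right _ (mem_biUnion.2 ⟨i, mem_univ i, insert_mem_openCone hσ⟩)

/-- The pieces of `coneCx X n w` for the patchwork theorem: the closed cone with apex `w 0` and
the open cones with the other apices. The order of `Fin (n + 1)` serves as the order of the base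
because a face lying in a different piece than its simplex lies in piece `0`, the least index. -/
def conePiece (X : Finset (Finset U)) (w : Fin (n + 1) → U) (i : Fin (n + 1)) :
    Finset (Finset U) :=
  if i = 0 then X ∪ openCone X (w 0) else openCone X (w i)

theorem biUnion_conePiece (X : Finset (Finset U)) (w : Fin (n + 1) → U) :
    univ.biUnion (conePiece X w) = coneCx X n w := by
  change _ = X ∪ univ.biUnion fun i => openCone X (w i)
  ext σ
  simp [conePiece, Fin.exists_fin_succ, or_assoc]

theorem isMonotonePartition_conePiece (hw : Function.Injective w)
    (hwX : ∀ i, ∀ σ ∈ X, w i ∉ σ) : IsMonotonePartition (conePiece X w) := by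
  intro i j σ hσ τ hτ hτσ
  obtain rfl | hj := eq_or_ne j 0
  · exact Fin.zero_le i
  have hjσ : w j ∈ σ := hτσ (apex_mem_of_mem_openCone (by rwa [conePiece, if_neg hj] at hτ))
  obtain rfl | hi := eq_or_ne i 0
  · rcases mem_union.1 hσ with hσX | hσC
    · exact absurd hjσ (hwX j σ hσX)
    · exact absurd (eq_of_apex_mem_of_mem_openCone hw hwX hσC hjσ) hj
  · rw [conePiece, if_neg hi] at hσ
    exact (eq_of_apex_mem_of_mem_openCone hw hwX hσ hjσ).le

theorem admitsAcyclicMatching_coneCx (hw : Function.Injective w)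
    (hwX : ∀ i, ∀ σ ∈ X, w i ∉ σ) (h : AdmitsAcyclicMatching X m) :
    AdmitsAcyclicMatching (coneCx X n w) (m + 1) := by
  rw [← biUnion_conePiece]
  refine .biUnion (isMonotonePartition_conePiece hw hwX) fun i => ?_
  rw [conePiece]
  split_ifs
  · exact (admitsAcyclicMatching_cone (hwX 0)).mono (Nat.le_add_left 1 m)
  · exact admitsAcyclicMatching_openCone h (hwX i)

theorem exists_insert_apex_eq (hw : Function.Injective w) (hwX : ∀ i, ∀ σ ∈ X, w i ∉ σ)
    (hσ : σ ∈ coneCx X n w) (hi : w i ∈ σ) (hcard : 1 < σ.card) :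
    ∃ ρ ∈ X, insert (w i) ρ = σ := by
  obtain ⟨ρ, hρ, rfl⟩ := mem_image.1 (mem_openCone_of_apex_mem hw hwX hσ hi)
  refine ⟨ρ, (mem_insert.1 hρ).resolve_left ?_, rfl⟩
  rintro rfl
  simp at hcard

theorem isCritical_insert_apex (hw : Function.Injective w) (hwX : ∀ i, ∀ σ ∈ X, w i ∉ σ)
    (hM : IsMatching (coneCx X n w) M) (hi : ∀ σ ∈ X, (insert (w i) σ, σ) ∉ M)
    (hσ : IsCritical X (comapMatching (insert (w i)) X M) σ) (hcard : 1 < σ.card) :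
    IsCritical (coneCx X n w) M (insert (w i) σ) := by
  have hσi : w i ∉ σ := hwX i σ hσ.1
  have hcard_insert : (insert (w i) σ).card = σ.card + 1 := card_insert_of_notMem hσi
  refine hσ.of_comap (insert_apex_mem_coneCx hσ.1 i) (fun τ hτ => ?_) fun τ hτ => ?_
  · have harc : HasseArc _ (insert (w i) σ) τ := hM.1 _ hτ
    have hiτ : w i ∈ τ := by
      by_contra hiτ
      obtain rfl : τ = σ := by
        rw [harc.eq_erase (mem_insert_self _ _) hiτ, erase_insert hσi]
      exact hi τ hσ.1 hτ
    obtain ⟨-, hτX, -, hστ⟩ := harc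
    exact exists_insert_apex_eq hw hwX hτX hiτ (by omega)
  · obtain ⟨hτX, -, hsub, -⟩ : HasseArc _ τ (insert (w i) σ) := hM.1 _ hτ
    have hlt := card_lt_card hsub
    exact exists_insert_apex_eq hw hwX hτX (hsub.1 (mem_insert_self _ _)) (by omega)

theorem admitsAcyclicMatching_of_coneCx {k : ℕ} (hn : X.card ≤ n) (hw : Function.Injective w)
    (hwX : ∀ i, ∀ σ ∈ X, w i ∉ σ) (h : AdmitsAcyclicMatching (coneCx X n w) (k + 2)) :
    AdmitsAcyclicMatching X (k + 1) := by
  obtain ⟨M, hM, hcrit⟩ := h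
  obtain ⟨i, hi⟩ := hM.1.exists_forall_insert_notMem (by simpa [Nat.lt_succ_iff] using hn) hw hwX
  refine ⟨comapMatching (insert (w i)) X M,
    hM.comap (insert_erase_invOn.2.injOn.mono (hwX i)) ?_, fun σ hσ => ?_⟩
  · exact fun σ hσ τ hτ => hasseArc_insert_iff hσ hτ (insert_apex_mem_coneCx hσ i)
      (insert_apex_mem_coneCx hτ i) (hwX i σ hσ) (hwX i τ hτ)
  · by_contra! hlarge
    have hle := hcrit _ (isCritical_insert_apex hw hwX hM.1 hi hσ (by omega))
    rw [card_insert_of_notMem (hwX i σ hσ.1)] at hle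
    omega

theorem collapsibility_transfer_general {k : ℕ} (hn : X.card ≤ n) (hw : Function.Injective w)
    (hwX : ∀ i, ∀ σ ∈ X, w i ∉ σ) :
    AdmitsAcyclicMatching X (k + 1) ↔ AdmitsAcyclicMatching (coneCx X n w) (k + 2) :=
  ⟨admitsAcyclicMatching_coneCx hw hwX, admitsAcyclicMatching_of_coneCx hn hw hwX⟩

end Cones

end

/-- `X` admits an acyclic matching with all critical simplices of
    dimension ≤ k iff `X'` admits an acyclic matching with all critical simplices
    of dimension ≤ k+1.  (dim σ ≤ k ↔ |σ| ≤ k+1.) -/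
theorem collapsibility_transfer {U : Type*} [DecidableEq U] (d k n : ℕ) (hdk : d > k)
    (X : Finset (Finset U)) (hX : IsComplex X) (hd : HasDim X d)
    (hn : X.card = n) (hn1 : 1 ≤ n)
    (w : Fin (n + 1) → U) (hw : Function.Injective w)
    (hwX : ∀ i : Fin (n + 1), ∀ σ ∈ X, w i ∉ σ) :
    (∃ M : Set (Finset U × Finset U), IsAcyclicMatching X M ∧
        ∀ σ, IsCritical X M σ → σ.card ≤ k + 1) ↔
    (∃ M' : Set (Finset U × Finset U), IsAcyclicMatching (coneCx X n w) M' ∧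
        ∀ σ, IsCritical (coneCx X n w) M' σ → σ.card ≤ k + 2) :=
  collapsibility_transfer_general hn.le hw hwX
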